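/- arXiv:1405.1476 — 2 statements merged into one kernel-verified Lean document; each statement's English description precedes it below -/
import Mathlib

section
/- Every planar 3-tree admits an intersection representation in which every vertex is represented by an axis-aligned L-shape of type ⌐ rotated (i.e., the union of a vertical segment and a horizontal segment meeting at the lower-left corner), such that two vertices are adjacent if and only if their L-shapes intersect. -/
/-- An axis-aligned L-shape: union of a vertical segment `[(x,y),(x,y+h)]` and a
horizontal segment `[(x,y),(x+w,y)]` sharing the bottom-left endpoint `(x,y)`. -/
def LShape (x y w h : ℝ) : Set (ℝ × ℝ) :=
  segment ℝ (x, y) (x, y + h) ∪ segment ℝ (x, y) (x + w, y)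

/-- `G` has an `{L}`-representation: every vertex gets an L-shape (all of the same
rotation), and two distinct vertices are adjacent iff their L-shapes intersect. -/
def HasLRep {V : Type*} (G : SimpleGraph V) : Prop :=
  ∃ p : V → ℝ × ℝ × ℝ × ℝ,
    (∀ v, 0 < (p v).2.2.1 ∧ 0 < (p v).2.2.2) ∧
    ∀ u v : V, u ≠ v →
      (G.Adj u v ↔
        (LShape (p u).1 (p u).2.1 (p u).2.2.1 (p u).2.2.2 ∩
          LShape (p v).1 (p v).2.1 (p v).2.2.1 (p v).2.2.2).Nonempty)

/-- `IsKTreeBase k b G`: the vertices of `G` can be linearly ordered so that the first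
`b` vertices form a clique, and every later vertex `v` has exactly `k` earlier
neighbours, which form a `k`-clique of `G`.  With `k = 3`, `b = 4` this is the
recursive definition of a 3-tree (start from `K₄`, repeatedly add a vertex whose
neighbourhood is a triangle); with `k = 2`, `b = 2` it is the definition of a 2-tree
built from an edge. -/
def IsKTreeBase (k b : ℕ) {V : Type*} (G : SimpleGraph V) : Prop :=
  b ≤ Nat.card V ∧
  ∃ r : V ≃ Fin (Nat.card V),
    (∀ u v : V, u ≠ v → (r u : ℕ) < b → (r v : ℕ) < b → G.Adj u v) ∧
    (∀ v : V, b ≤ (r v : ℕ) → ∃ S : Finset V,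
      S.card = k ∧ (∀ u ∈ S, (r u : ℕ) < (r v : ℕ)) ∧
      (∀ a ∈ S, ∀ c ∈ S, a ≠ c → G.Adj a c) ∧
      (∀ u : V, (r u : ℕ) < (r v : ℕ) → (G.Adj u v ↔ u ∈ S)))

/-- A 3-tree: obtained from `K₄` by repeatedly adding a vertex adjacent to the three
vertices of an existing triangle. -/
def IsThreeTree {V : Type*} (G : SimpleGraph V) : Prop :=
  IsKTreeBase 3 4 G

/-- A topological plane embedding of a simple graph: vertices are distinct points,
each edge is a simple arc between the points of its endpoints, arcs meet vertex
points only at their own endpoints, and two distinct arcs can only meet in points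
that are vertex points (hence shared endpoints). -/
def SimpleGraph.IsPlanar {V : Type*} (G : SimpleGraph V) : Prop :=
  ∃ (pos : V → ℝ × ℝ) (arc : G.edgeSet → ℝ → ℝ × ℝ),
    Function.Injective pos ∧
    (∀ e, ContinuousOn (arc e) (Set.Icc 0 1)) ∧
    (∀ e, Set.InjOn (arc e) (Set.Icc 0 1)) ∧
    (∀ e : G.edgeSet, ∀ u v : V, (e : Sym2 V) = s(u, v) →
      (arc e 0 = pos u ∧ arc e 1 = pos v) ∨ (arc e 0 = pos v ∧ arc e 1 = pos u)) ∧
    (∀ e : G.edgeSet, ∀ v : V, ∀ t ∈ Set.Icc (0 : ℝ) 1,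
      arc e t = pos v → v ∈ (e : Sym2 V)) ∧
    (∀ e f : G.edgeSet, e ≠ f → ∀ s ∈ Set.Icc (0 : ℝ) 1, ∀ t ∈ Set.Icc (0 : ℝ) 1,
      arc e s = arc f t → ∃ v : V, arc e s = pos v)

/-- The increment over `[0, 1]` of a continuous logarithm of `g`. -/
noncomputable def logIncrement (g : ℝ → ℂ) : ℂ :=
  Classical.epsilon fun δ =>
    ∃ L : ℝ → ℂ, Continuous L ∧ (∀ t, Complex.exp (L t) = g t) ∧ δ = L 1 - L 0

lemma logIncrement_eq {g L : ℝ → ℂ} (hL : Continuous L) (hg : ∀ t, Complex.exp (L t) = g t) :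
    logIncrement g = L 1 - L 0 := by
  obtain ⟨M, hM, hMg, h⟩ := Classical.epsilon_spec
    (p := fun δ => ∃ L : ℝ → ℂ, Continuous L ∧ (∀ t, Complex.exp (L t) = g t) ∧ δ = L 1 - L 0)
    ⟨_, L, hL, hg, rfl⟩
  have hc : M = fun t => L t + (M 0 - L 0) := by
    refine Complex.isCoveringMap_exp.eq_of_comp_eq hM (by fun_prop) ?_ 0 (by ring)
    funext t
    apply Subtype.ext
    simp only [Function.comp_apply, Complex.exp_add, Complex.exp_sub, hMg, hg,
      div_self (hg 0 ▸ Complex.exp_ne_zero (L 0)), mul_one]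
  have h1 : M 1 = L 1 + (M 0 - L 0) := congrFun hc 1
  calc logIncrement g = M 1 - M 0 := h
    _ = L 1 - L 0 := by rw [h1]; ring

lemma exists_continuous_log {X : Type*} [TopologicalSpace X] [LocallyPathConnectedSpace X]
    [ContractibleSpace X] {g : X → ℂ} (hg : Continuous g) (h0 : ∀ x, g x ≠ 0) :
    ∃ L : X → ℂ, Continuous L ∧ ∀ x, Complex.exp (L x) = g x := by
  obtain ⟨x₀⟩ : Nonempty X := inferInstance
  obtain ⟨f, ⟨-, hf⟩, -⟩ := Complex.isCoveringMapOn_exp.existsUnique_continuousMap_lifts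
    ⟨g, hg⟩ (Complex.exp_log (h0 x₀)) h0
  exact ⟨f, f.continuous, congrFun hf⟩

lemma exp_logIncrement {g : ℝ → ℂ} (hg : Continuous g) (h0 : ∀ t, g t ≠ 0) :
    Complex.exp (logIncrement g) = g 1 / g 0 := by
  obtain ⟨L, hL, hLg⟩ := exists_continuous_log hg h0
  rw [logIncrement_eq hL hLg, Complex.exp_sub, hLg, hLg]

/-- The boundary of the square `[0, 1] × [0, 1]` has winding number zero under the difference
of two disjoint paths. -/
lemma logIncrement_square {α β : ℝ → ℂ} (hα : Continuous α) (hβ : Continuous β)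
    (h : ∀ s t, α s ≠ β t) :
    logIncrement (fun s => α s - β 0) + logIncrement (fun t => β t - α 1) =
      logIncrement (fun s => α s - β 1) + logIncrement (fun t => β t - α 0) := by
  obtain ⟨L, hL, hLg⟩ := exists_continuous_log (X := ℝ × ℝ) (g := fun x => α x.1 - β x.2)
    (by fun_prop) fun x => sub_ne_zero.2 (h _ _)
  have hfst (t : ℝ) : logIncrement (fun s => α s - β t) = L (1, t) - L (0, t) :=
    logIncrement_eq (L := fun s => L (s, t)) (by fun_prop) fun s => hLg (s, t)
  have hsnd (s : ℝ) : logIncrement (fun t => β t - α s) = L (s, 1) - L (s, 0) := by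
    rw [logIncrement_eq (L := fun t => L (s, t) + Real.pi * Complex.I) (by fun_prop) fun t => by
      rw [Complex.exp_add, hLg, Complex.exp_pi_mul_I]; ring]
    ring
  rw [hfst, hfst, hsnd, hsnd]
  ring

/-- The complete bipartite graph `K₃,₃` cannot be drawn in the plane with disjoint
nonadjacent edges. -/
theorem not_planar_K33 {γ : Fin 3 → Fin 3 → ℝ → ℂ} {a b : Fin 3 → ℂ}
    (hγ : ∀ i j, Continuous (γ i j)) (h0 : ∀ i j, γ i j 0 = a i) (h1 : ∀ i j, γ i j 1 = b j)
    (hd : ∀ i j k l, i ≠ k → j ≠ l → ∀ s t, γ i j s ≠ γ k l t) : False := by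
  have other (i : Fin 3) : ∃ k, i ≠ k := (exists_ne i).imp fun _ => Ne.symm
  have hab (i j) : b j - a i ≠ 0 := by
    obtain ⟨k, hk⟩ := other i
    obtain ⟨l, hl⟩ := other j
    rw [← h0 i l, ← h1 k j]
    exact sub_ne_zero.2 (hd k j i l hk.symm hl 1 0)
  have hγa (i j k) (hk : i ≠ k) (t) : γ i j t - a k ≠ 0 := by
    obtain ⟨l, hl⟩ := other j
    rw [← h0 k l]
    exact sub_ne_zero.2 (hd i j k l hk hl t 0)
  have hγb (i j l) (hl : j ≠ l) (t) : γ i j t - b l ≠ 0 := by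
    obtain ⟨k, hk⟩ := other i
    rw [← h1 k l]
    exact sub_ne_zero.2 (hd i j k l hk hl t 1)
  have ha (i k) (hk : i ≠ k) : a i - a k ≠ 0 := by
    simpa [h0] using hγa i 0 k hk 0
  have hb (j l) (hl : j ≠ l) : b j - b l ≠ 0 := by
    simpa [h1] using hγb 0 j l hl 1
  set A : Fin 3 → Fin 3 → Fin 3 → ℂ := fun k i j => logIncrement fun t => γ i j t - a k with hA
  set B : Fin 3 → Fin 3 → Fin 3 → ℂ := fun l i j => logIncrement fun t => γ i j t - b l with hB
  have expA (i j k) (hk : i ≠ k) : Complex.exp (A k i j) = (b j - a k) / (a i - a k) := by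
    rw [hA]
    dsimp only
    rw [exp_logIncrement (by fun_prop) (hγa i j k hk), h0, h1]
  have expB (i j l) (hl : j ≠ l) : Complex.exp (B l i j) = (b j - b l) / (a i - b l) := by
    rw [hB]
    dsimp only
    rw [exp_logIncrement (by fun_prop) (hγb i j l hl), h0, h1]
  have hsq (i j k l) (hk : i ≠ k) (hl : j ≠ l) :
      A k i j + B j k l = B l i j + A i k l := by
    simpa only [h0, h1] using logIncrement_square (hγ i j) (hγ k l) (hd i j k l hk hl)
  have expU (i k) (hk : i ≠ k) :
      Complex.exp (∑ j, (A k i j - A i k j)) = -((∏ j, (b j - a k)) / ∏ j, (b j - a i)) := by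
    have h (j) : Complex.exp (A k i j - A i k j) = -((b j - a k) / (b j - a i)) := by
      rw [Complex.exp_sub, expA i j k hk, expA k j i hk.symm, ← neg_sub (a i) (a k)]
      have := ha i k hk
      have := hab i j
      field_simp
    rw [Complex.exp_sum, Finset.prod_congr rfl fun j _ => h j, Finset.prod_neg,
      Finset.prod_div_distrib]
    norm_num
  have expV (j l) (hl : j ≠ l) :
      Complex.exp (B j 2 l - B j 0 l) = (b j - a 0) / (b j - a 2) := by
    rw [Complex.exp_sub, expB 2 l j hl.symm, expB 0 l j hl.symm, ← neg_sub (b j) (a 0),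
      ← neg_sub (b j) (a 2)]
    have := hb l j hl.symm
    have := hab 0 j
    have := hab 2 j
    field_simp
  have hW : (∑ j, (A 1 0 j - A 0 1 j)) + (∑ j, (A 2 0 j - A 0 2 j)) +
      (∑ j, (A 2 1 j - A 1 2 j)) + ((B 0 2 1 - B 0 0 1) + (B 0 2 2 - B 0 0 2) +
      (B 1 2 0 - B 1 0 0) + (B 1 2 2 - B 1 0 2) + (B 2 2 0 - B 2 0 0) + (B 2 2 1 - B 2 0 1))
      = 0 := by
    have e (i j k l) (hk : i ≠ k := by decide) (hl : j ≠ l := by decide) := hsq i j k l hk hl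
    simp only [Fin.sum_univ_three]
    linear_combination (e 0 0 1 1 + e 0 0 1 2 + e 0 1 1 0 + e 0 1 1 2 + e 0 2 1 0 + e 0 2 1 1 +
      e 0 0 2 1 + e 0 0 2 2 + e 0 1 2 0 + e 0 1 2 2 + e 0 2 2 0 + e 0 2 2 1 +
      e 1 0 2 1 + e 1 0 2 2 + e 1 1 2 0 + e 1 1 2 2 + e 1 2 2 0 + e 1 2 2 1) / 2
  have hexp := congrArg Complex.exp hW
  simp only [Complex.exp_add _ (_ + _), Complex.exp_add (_ + _) (_ - _), Complex.exp_add (_ - _),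
    Complex.exp_add (∑ _, _), Complex.exp_add (_ + ∑ _, _)] at hexp
  rw [expU 0 1 (by decide), expU 0 2 (by decide), expU 1 2 (by decide), expV 0 1 (by decide),
    expV 0 2 (by decide), expV 1 0 (by decide), expV 1 2 (by decide), expV 2 0 (by decide),
    expV 2 1 (by decide), Complex.exp_zero] at hexp
  simp only [Fin.prod_univ_three] at hexp
  have h00 := hab 0 0
  have h01 := hab 0 1
  have h02 := hab 0 2
  have h10 := hab 1 0
  have h11 := hab 1 1
  have h12 := hab 1 2
  have h20 := hab 2 0
  have h21 := hab 2 1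
  have h22 := hab 2 2
  field_simp at hexp
  norm_num at hexp

lemma mem_LShape {x y w h : ℝ} (hw : 0 ≤ w) (hh : 0 ≤ h) {q : ℝ × ℝ} :
    q ∈ LShape x y w h ↔
      (q.1 = x ∧ y ≤ q.2 ∧ q.2 ≤ y + h) ∨ (q.2 = y ∧ x ≤ q.1 ∧ q.1 ≤ x + w) := by
  obtain ⟨u, v⟩ := q
  rw [LShape, ← Prod.image_mk_segment_right, ← Prod.image_mk_segment_left,
    segment_eq_Icc (by linarith), segment_eq_Icc (by linarith)]
  simp only [Set.mem_union, Set.mem_image, Set.mem_Icc, Prod.mk.injEq]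
  grind

/-- A half-open rectangle without its upper right corner beyond `(c, d)`. -/
def notchedRect (l b c d X Y : ℝ) : Set (ℝ × ℝ) :=
  {q | l < q.1 ∧ q.1 ≤ X ∧ b < q.2 ∧ q.2 ≤ Y ∧ ¬(c < q.1 ∧ d < q.2)}

/-- A half-open rectangle without its lower left corner up to `(c, d)`. -/
def conotchedRect (l b c d X Y : ℝ) : Set (ℝ × ℝ) :=
  {q | l < q.1 ∧ q.1 ≤ X ∧ b < q.2 ∧ q.2 ≤ Y ∧ (c < q.1 ∨ d < q.2)}

/-- The possible shapes of a region in which an L-shape meeting each of `A`, `B` and `C` can be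
inserted, described by the traces of `A`, `B` and `C` on it. -/
inductive IsFreeRegion (A B C : Set (ℝ × ℝ)) : Set (ℝ × ℝ) → Prop
  | vertical (l b c d X Y m : ℝ) (hlm : l < m) (hmc : m < c) (hcX : c ≤ X) (hbd : b < d)
      (hdY : d ≤ Y)
      (hA : ∀ q ∈ notchedRect l b c d X Y, q ∈ A ↔ q.2 = Y)
      (hB : ∀ q ∈ notchedRect l b c d X Y, q ∈ B ↔ q.1 = m)
      (hC : ∀ q ∈ notchedRect l b c d X Y, q ∈ C ↔ q.1 = X) :
      IsFreeRegion A B C (notchedRect l b c d X Y)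
  | horizontal (l b c d X Y m : ℝ) (hlc : l < c) (hcX : c ≤ X) (hbm : b < m) (hmd : m < d)
      (hdY : d ≤ Y)
      (hA : ∀ q ∈ notchedRect l b c d X Y, q ∈ A ↔ q.2 = Y)
      (hB : ∀ q ∈ notchedRect l b c d X Y, q ∈ B ↔ q.2 = m)
      (hC : ∀ q ∈ notchedRect l b c d X Y, q ∈ C ↔ q.1 = X) :
      IsFreeRegion A B C (notchedRect l b c d X Y)
  | outer (l b c d X Y x₁ y₁ e x₂ : ℝ) (hlx : l < x₁) (hxx : x₁ < x₂) (hxc : x₂ < c) (hcX : c < X)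
      (hby : b < y₁) (hyd : y₁ < d) (hde : d < e) (heY : e < Y)
      (hA : ∀ q ∈ conotchedRect l b c d X Y, q ∈ A ↔ (q.1 = x₁ ∧ q.2 ≤ e) ∨ q.2 = y₁)
      (hB : ∀ q ∈ conotchedRect l b c d X Y, q ∈ B ↔ q.1 = x₂)
      (hC : ∀ q ∈ conotchedRect l b c d X Y, q ∈ C ↔ q.1 = X) :
      IsFreeRegion A B C (conotchedRect l b c d X Y)

/-- `R` is a free region for `A`, `B` and `D`, with `D` in any position relative to `A`, `B`. -/
def IsFreeRegionInsert (A B D R : Set (ℝ × ℝ)) : Prop :=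
  IsFreeRegion D A B R ∨ IsFreeRegion A D B R ∨ IsFreeRegion A B D R

/-- The L-shape `D` meets `A`, `B`, `C`, lies inside `R`, and leaves the disjoint regions
`R₁`, `R₂`, `R₃` of `R` free. -/
structure IsSplitting (A B C R D R₁ R₂ R₃ : Set (ℝ × ℝ)) : Prop where
  subset : D ⊆ R
  meetA : (D ∩ A).Nonempty
  meetB : (D ∩ B).Nonempty
  meetC : (D ∩ C).Nonempty
  subset₁ : R₁ ⊆ R
  subset₂ : R₂ ⊆ R
  subset₃ : R₃ ⊆ R
  disjoint₁₂ : Disjoint R₁ R₂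
  disjoint₁₃ : Disjoint R₁ R₃
  disjoint₂₃ : Disjoint R₂ R₃
  free₁ : IsFreeRegionInsert A B D R₁
  free₂ : IsFreeRegionInsert A C D R₂
  free₃ : IsFreeRegionInsert B C D R₃
  avoid₁ : Disjoint C R₁
  avoid₂ : Disjoint B R₂
  avoid₃ : Disjoint A R₃

lemma exists_splitting_vertical {A B C : Set (ℝ × ℝ)} {l b c d X Y m : ℝ} (hlm : l < m)
    (hmc : m < c) (hcX : c ≤ X) (hbd : b < d) (hdY : d ≤ Y)
    (hA : ∀ q ∈ notchedRect l b c d X Y, q ∈ A ↔ q.2 = Y)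
    (hB : ∀ q ∈ notchedRect l b c d X Y, q ∈ B ↔ q.1 = m)
    (hC : ∀ q ∈ notchedRect l b c d X Y, q ∈ C ↔ q.1 = X) :
    ∃ x y w h, 0 < w ∧ 0 < h ∧ ∃ R₁ R₂ R₃,
      IsSplitting A B C (notchedRect l b c d X Y) (LShape x y w h) R₁ R₂ R₃ := by
  obtain ⟨x, hlx, hxm⟩ := exists_between hlm
  obtain ⟨c', hmc', hcc'⟩ := exists_between hmc
  obtain ⟨y, hby, hyd⟩ := exists_between hbd
  obtain ⟨b', hbb', hby'⟩ := exists_between hby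
  have hw : 0 < X - x := by linarith
  have hh : 0 < Y - y := by linarith
  have hD (q) : q ∈ LShape x y (X - x) (Y - y) ↔ _ := mem_LShape hw.le hh.le
  simp only [add_sub_cancel] at hD
  simp only [notchedRect, Set.mem_ofPred_eq] at hA hB hC
  refine ⟨x, y, X - x, Y - y, hw, hh, notchedRect l y m Y m Y, notchedRect c' b' c d X Y,
    notchedRect x b c' b' X y, ?_⟩
  constructor
  case meetA =>
    have := hA (x, Y); exact ⟨(x, Y), by grind⟩
  case meetB =>
    have := hB (m, y); exact ⟨(m, y), by grind⟩
  case meetC =>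
    have := hC (X, y); exact ⟨(X, y), by grind⟩
  case free₁ =>
    refine .inr (.inl (.vertical _ _ _ _ _ _ x ?_ ?_ ?_ ?_ ?_ ?_ ?_ ?_)) <;> grind [notchedRect]
  case free₂ =>
    refine .inr (.inl (.horizontal _ _ _ _ _ _ y ?_ ?_ ?_ ?_ ?_ ?_ ?_ ?_)) <;> grind [notchedRect]
  case free₃ =>
    refine .inl (.vertical _ _ _ _ _ _ m ?_ ?_ ?_ ?_ ?_ ?_ ?_ ?_) <;> grind [notchedRect]
  all_goals
    simp only [Set.disjoint_left, Set.subset_def, notchedRect, Set.mem_ofPred_eq]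
    grind

lemma exists_splitting_horizontal {A B C : Set (ℝ × ℝ)} {l b c d X Y m : ℝ} (hlc : l < c)
    (hcX : c ≤ X) (hbm : b < m) (hmd : m < d) (hdY : d ≤ Y)
    (hA : ∀ q ∈ notchedRect l b c d X Y, q ∈ A ↔ q.2 = Y)
    (hB : ∀ q ∈ notchedRect l b c d X Y, q ∈ B ↔ q.2 = m)
    (hC : ∀ q ∈ notchedRect l b c d X Y, q ∈ C ↔ q.1 = X) :
    ∃ x y w h, 0 < w ∧ 0 < h ∧ ∃ R₁ R₂ R₃,
      IsSplitting A B C (notchedRect l b c d X Y) (LShape x y w h) R₁ R₂ R₃ := by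
  obtain ⟨x, hlx, hxc⟩ := exists_between hlc
  obtain ⟨l', hll', hlx'⟩ := exists_between hlx
  obtain ⟨y, hby, hym⟩ := exists_between hbm
  obtain ⟨d', hmd', hdd'⟩ := exists_between hmd
  have hw : 0 < X - x := by linarith
  have hh : 0 < Y - y := by linarith
  have hD (q) : q ∈ LShape x y (X - x) (Y - y) ↔ _ := mem_LShape hw.le hh.le
  simp only [add_sub_cancel] at hD
  simp only [notchedRect, Set.mem_ofPred_eq] at hA hB hC
  refine ⟨x, y, X - x, Y - y, hw, hh, notchedRect l y l' d' x Y, notchedRect l' d' c d X Y,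
    notchedRect x b X m X m, ?_⟩
  constructor
  case meetA =>
    have := hA (x, Y); exact ⟨(x, Y), by grind⟩
  case meetB =>
    have := hB (x, m); exact ⟨(x, m), by grind⟩
  case meetC =>
    have := hC (X, y); exact ⟨(X, y), by grind⟩
  case free₁ =>
    refine .inr (.inr (.horizontal _ _ _ _ _ _ m ?_ ?_ ?_ ?_ ?_ ?_ ?_ ?_)) <;> grind [notchedRect]
  case free₂ =>
    refine .inr (.inl (.vertical _ _ _ _ _ _ x ?_ ?_ ?_ ?_ ?_ ?_ ?_ ?_)) <;> grind [notchedRect]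
  case free₃ =>
    refine .inr (.inl (.horizontal _ _ _ _ _ _ y ?_ ?_ ?_ ?_ ?_ ?_ ?_ ?_)) <;> grind [notchedRect]
  all_goals
    simp only [Set.disjoint_left, Set.subset_def, notchedRect, Set.mem_ofPred_eq]
    grind

lemma exists_splitting_outer {A B C : Set (ℝ × ℝ)} {l b c d X Y x₁ y₁ e x₂ : ℝ} (hlx : l < x₁)
    (hxx : x₁ < x₂) (hxc : x₂ < c) (hcX : c < X) (hby : b < y₁) (hyd : y₁ < d) (hde : d < e)
    (heY : e < Y)
    (hA : ∀ q ∈ conotchedRect l b c d X Y, q ∈ A ↔ (q.1 = x₁ ∧ q.2 ≤ e) ∨ q.2 = y₁)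
    (hB : ∀ q ∈ conotchedRect l b c d X Y, q ∈ B ↔ q.1 = x₂)
    (hC : ∀ q ∈ conotchedRect l b c d X Y, q ∈ C ↔ q.1 = X) :
    ∃ x y w h, 0 < w ∧ 0 < h ∧ ∃ R₁ R₂ R₃,
      IsSplitting A B C (conotchedRect l b c d X Y) (LShape x y w h) R₁ R₂ R₃ := by
  obtain ⟨x, hlx', hxx₁⟩ := exists_between hlx
  obtain ⟨e', hee', heY'⟩ := exists_between heY
  obtain ⟨b', heb', hbe'⟩ := exists_between hee'
  obtain ⟨c', hcc', hcX'⟩ := exists_between hcX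
  obtain ⟨d', hyd', hde'⟩ := exists_between (hyd.trans hde)
  have hw : 0 < X - x := by linarith
  have hh : 0 < e' - e := by linarith
  have hD (q) : q ∈ LShape x e (X - x) (e' - e) ↔ _ := mem_LShape hw.le hh.le
  simp only [add_sub_cancel] at hD
  simp only [conotchedRect, Set.mem_ofPred_eq] at hA hB hC
  refine ⟨x, e, X - x, e' - e, hw, hh, notchedRect x d x₂ e x₂ e, notchedRect c b c' d' X e,
    conotchedRect l d' c' b' X Y, ?_⟩
  constructor
  case meetA =>
    have := hA (x₁, e); exact ⟨(x₁, e), by grind⟩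
  case meetB =>
    have := hB (x₂, e); exact ⟨(x₂, e), by grind⟩
  case meetC =>
    have := hC (X, e); exact ⟨(X, e), by grind⟩
  case free₁ =>
    refine .inl (.vertical _ _ _ _ _ _ x₁ ?_ ?_ ?_ ?_ ?_ ?_ ?_ ?_) <;> grind [notchedRect]
  case free₂ =>
    refine .inl (.horizontal _ _ _ _ _ _ y₁ ?_ ?_ ?_ ?_ ?_ ?_ ?_ ?_) <;> grind [notchedRect]
  case free₃ =>
    refine .inl (.outer _ _ _ _ _ _ x e e' x₂ ?_ ?_ ?_ ?_ ?_ ?_ ?_ ?_ ?_ ?_ ?_) <;>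
      grind [conotchedRect]
  all_goals
    simp only [Set.disjoint_left, Set.subset_def, notchedRect, conotchedRect, Set.mem_ofPred_eq]
    grind

/-- In a free region for three L-shapes, a new L-shape can be inserted that meets these three and
leaves a free region for every triangle it creates. -/
lemma IsFreeRegion.exists_splitting {A B C R : Set (ℝ × ℝ)} (hR : IsFreeRegion A B C R) :
    ∃ x y w h, 0 < w ∧ 0 < h ∧ ∃ R₁ R₂ R₃, IsSplitting A B C R (LShape x y w h) R₁ R₂ R₃ := by
  cases hR with
  | vertical => apply exists_splitting_vertical <;> assumption
  | horizontal => apply exists_splitting_horizontal <;> assumption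
  | outer =>
    rename_i h₁ h₂ h₃ h₄ h₅ h₆ h₇ h₈ hA hB hC
    exact exists_splitting_outer h₁ h₂ h₃ h₄ h₅ h₆ h₇ h₈ hA hB hC

/-- An edge of a plane embedding as a curve parametrized by `ℝ`. -/
lemma exists_edge_curve {V : Type*} {G : SimpleGraph V} {pos : V → ℝ × ℝ}
    {arc : G.edgeSet → ℝ → ℝ × ℝ} (hc : ∀ e, ContinuousOn (arc e) (Set.Icc 0 1))
    (he : ∀ e : G.edgeSet, ∀ u v : V, (e : Sym2 V) = s(u, v) →
      (arc e 0 = pos u ∧ arc e 1 = pos v) ∨ (arc e 0 = pos v ∧ arc e 1 = pos u))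
    {u v : V} (huv : G.Adj u v) :
    ∃ γ : ℝ → ℝ × ℝ, Continuous γ ∧ γ 0 = pos u ∧ γ 1 = pos v ∧
      ∀ t, ∃ s ∈ Set.Icc (0 : ℝ) 1, γ t = arc ⟨s(u, v), huv⟩ s := by
  have hcont := (continuousOn_iff_continuous_domRestrict.1 (hc ⟨s(u, v), huv⟩)).Icc_extend'
    (h := zero_le_one)
  have hmem (t : ℝ) : ∃ s ∈ Set.Icc (0 : ℝ) 1,
      Set.IccExtend zero_le_one ((Set.Icc 0 1).domRestrict (arc ⟨s(u, v), huv⟩)) t =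
        arc ⟨s(u, v), huv⟩ s :=
    ⟨_, (Set.projIcc 0 1 zero_le_one t).2, rfl⟩
  have h0 : Set.IccExtend zero_le_one ((Set.Icc 0 1).domRestrict (arc ⟨s(u, v), huv⟩)) 0 =
      arc ⟨s(u, v), huv⟩ 0 := by simp
  have h1 : Set.IccExtend zero_le_one ((Set.Icc 0 1).domRestrict (arc ⟨s(u, v), huv⟩)) 1 =
      arc ⟨s(u, v), huv⟩ 1 := by simp
  rcases he ⟨s(u, v), huv⟩ u v rfl with ⟨hu, hv⟩ | ⟨hv, hu⟩
  · exact ⟨_, hcont, h0.trans hu, h1.trans hv, hmem⟩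
  · exact ⟨_, hcont.comp (continuous_const.sub continuous_id : Continuous fun t : ℝ => 1 - t),
      by simpa using h1.trans hu, by simpa using h0.trans hv, fun t => hmem (1 - t)⟩

/-- A planar graph contains no `K₃,₃`. -/
theorem SimpleGraph.IsPlanar.not_adj_three_three {V : Type*} {G : SimpleGraph V} (hG : G.IsPlanar)
    {S W : Finset V} (hS : S.card = 3) (hW : W.card = 3) (hadj : ∀ u ∈ S, ∀ w ∈ W, G.Adj u w) :
    False := by
  obtain ⟨pos, arc, -, hc, -, he, hv, hd⟩ := hG
  set a : Fin 3 → V := fun i => (S.equivFinOfCardEq hS).symm i with ha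
  set b : Fin 3 → V := fun i => (W.equivFinOfCardEq hW).symm i with hb
  have haa : a.Injective := Subtype.val_injective.comp (Equiv.injective _)
  have hbb : b.Injective := Subtype.val_injective.comp (Equiv.injective _)
  have hab (i j) : G.Adj (a i) (b j) := hadj _ (Subtype.prop _) _ (Subtype.prop _)
  choose γ hγ h0 h1 hγs using fun i j => exists_edge_curve hc he (hab i j)
  let φ := Complex.equivRealProdCLM.symm
  refine not_planar_K33 (γ := fun i j t => φ (γ i j t)) (a := fun i => φ (pos (a i)))
    (b := fun j => φ (pos (b j))) (fun i j => φ.continuous.comp (hγ i j))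
    (fun i j => by rw [h0]) (fun i j => by rw [h1]) fun i j k l hik hjl s t hst => ?_
  obtain ⟨s', hs', hs⟩ := hγs i j s
  obtain ⟨t', ht', ht⟩ := hγs k l t
  have harc : arc ⟨s(a i, b j), hab i j⟩ s' = arc ⟨s(a k, b l), hab k l⟩ t' := by
    rw [← hs, ← ht]
    exact φ.injective hst
  have hdisj (v : V) (h₁ : v = a i ∨ v = b j) (h₂ : v = a k ∨ v = b l) : False := by
    rcases h₁ with rfl | rfl <;> rcases h₂ with h | h
    · exact hik (haa h)
    · exact (hab i l).ne h
    · exact (hab k j).ne h.symm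
    · exact hjl (hbb h)
  obtain ⟨v, hpv⟩ := hd ⟨s(a i, b j), hab i j⟩ ⟨s(a k, b l), hab k l⟩ (fun h => hdisj (a i)
    (.inl rfl) (by simpa using congrArg (a i ∈ ·) (congrArg Subtype.val h))) s' hs' t' ht' harc
  exact hdisj v (Sym2.mem_iff.1 (hv _ v s' hs' hpv)) (Sym2.mem_iff.1 (hv _ v t' ht' (harc ▸ hpv)))

/-- The L-shape with corner `(q.1, q.2.1)`, width `q.2.2.1` and height `q.2.2.2`. -/
def lShapeOf (q : ℝ × ℝ × ℝ × ℝ) : Set (ℝ × ℝ) :=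
  LShape q.1 q.2.1 q.2.2.1 q.2.2.2

lemma isFreeRegion_conotchedRect :
    IsFreeRegion (LShape 1 3 10 2) (LShape 2 2 2 10) (LShape 4 1 1 10)
      (conotchedRect 0 (11 / 4) 3 4 4 6) := by
  apply IsFreeRegion.outer (x₁ := 1) (y₁ := 3) (e := 5) (x₂ := 2) <;> try norm_num only
  all_goals
    rintro ⟨x, y⟩ ⟨h1, h2, h3, h4, h5⟩
    rw [mem_LShape (by norm_num) (by norm_num)]
    grind

lemma isFreeRegion_notchedRect :
    IsFreeRegion (LShape 1 3 10 2) (LShape 2 2 2 10) (LShape 4 1 1 10)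
      (notchedRect 1 2 3 (11 / 4) 4 3) := by
  apply IsFreeRegion.vertical (m := 2) <;> try norm_num only
  all_goals
    rintro ⟨x, y⟩ ⟨h1, h2, h3, h4, h5⟩
    rw [mem_LShape (by norm_num) (by norm_num)]
    grind

section Construction

open Classical in
lemma eq_of_card_three_of_subset_insert {v a b c : V} {T : Finset V} (hT : T.card = 3)
    (hv : v ∈ T) (h : ∀ u ∈ T, u ≠ v → u = a ∨ u = b ∨ u = c) :
    T = {a, b, v} ∨ T = {a, c, v} ∨ T = {b, c, v} := by
  have h2 : (T.erase v).card = 2 := by rw [Finset.card_erase_of_mem hv, hT]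
  obtain ⟨x, y, hxy, he⟩ := Finset.card_eq_two.1 h2
  have hT' : T = {v, x, y} := by rw [← he, Finset.insert_erase hv]
  have hx : x ∈ T.erase v := by simp [he]
  have hy : y ∈ T.erase v := by simp [he]
  rw [Finset.mem_erase] at hx hy
  rcases h x hx.2 hx.1 with rfl | rfl | rfl <;> rcases h y hy.2 hy.1 with rfl | rfl | rfl <;>
    first
    | exact absurd rfl hxy
    | exact .inl (by rw [hT']; ext; simp; tauto)
    | exact .inr (.inl (by rw [hT']; ext; simp; tauto))
    | exact .inr (.inr (by rw [hT']; ext; simp; tauto))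

open Classical in
/-- `R` is a free region for the three sets indexed by `T`. -/
def IsFreeFor {V : Type*} (S : V → Set (ℝ × ℝ)) (T : Finset V) (R : Set (ℝ × ℝ)) : Prop :=
  ∃ a b c, T = {a, b, c} ∧ IsFreeRegion (S a) (S b) (S c) R

lemma IsFreeFor.congr {V : Type*} {S S' : V → Set (ℝ × ℝ)} {T : Finset V} {R : Set (ℝ × ℝ)}
    (h : IsFreeFor S T R) (hS : ∀ u ∈ T, S u = S' u) : IsFreeFor S' T R := by
  obtain ⟨a, b, c, rfl, hR⟩ := h
  refine ⟨a, b, c, rfl, ?_⟩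
  rwa [← hS a (by simp), ← hS b (by simp), ← hS c (by simp)]

open Classical in
lemma IsFreeRegionInsert.isFreeFor {V : Type*} {S : V → Set (ℝ × ℝ)} {a b v : V}
    {R : Set (ℝ × ℝ)} (h : IsFreeRegionInsert (S a) (S b) (S v) R) : IsFreeFor S {a, b, v} R := by
  rcases h with h | h | h
  · exact ⟨_, _, _, by grind, h⟩
  · exact ⟨_, _, _, by grind, h⟩
  · exact ⟨_, _, _, rfl, h⟩

open Classical in
/-- `p` represents the vertices of rank below `n`, and `E` lists disjoint regions available for the
insertion of common neighbours of triangles, sufficiently many to provide every triangle with two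
common neighbours. -/
structure IsPartialRep {V : Type*} [Fintype V] (G : SimpleGraph V) (r : V → ℕ) (n : ℕ)
    (p : V → ℝ × ℝ × ℝ × ℝ) (E : List (Finset V × Set (ℝ × ℝ))) : Prop where
  pos : ∀ v, 0 < (p v).2.2.1 ∧ 0 < (p v).2.2.2
  adj_iff : ∀ u v, u ≠ v → r u < n → r v < n →
    (G.Adj u v ↔ (lShapeOf (p u) ∩ lShapeOf (p v)).Nonempty)
  lt : ∀ e ∈ E, ∀ u ∈ e.1, r u < n
  free : ∀ e ∈ E, IsFreeFor (fun v => lShapeOf (p v)) e.1 e.2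
  avoid : ∀ e ∈ E, ∀ u, r u < n → u ∉ e.1 → Disjoint (lShapeOf (p u)) e.2
  pairwise : E.Pairwise fun e f => Disjoint e.2 f.2
  count : ∀ T : Finset V, T.card = 3 → (∀ u ∈ T, r u < n) → G.IsClique T →
    2 ≤ (E.map Prod.fst).count T + Finset.card {w | r w < n ∧ ∀ u ∈ T, G.Adj u w}

variable {V : Type*} [Fintype V] {G : SimpleGraph V} {r : V → ℕ} {n : ℕ}
  {p : V → ℝ × ℝ × ℝ × ℝ} {E E' : List (Finset V × Set (ℝ × ℝ))}

lemma IsPartialRep.perm (h : IsPartialRep G r n p E) (hE : E.Perm E') :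
    IsPartialRep G r n p E' where
  pos := h.pos
  adj_iff := h.adj_iff
  lt e he := h.lt e (hE.mem_iff.2 he)
  free e he := h.free e (hE.mem_iff.2 he)
  avoid e he := h.avoid e (hE.mem_iff.2 he)
  pairwise := (hE.pairwise_iff fun h => h.symm).1 h.pairwise
  count T := by
    classical
    rw [← (hE.map Prod.fst).count_eq]
    exact h.count T

open Classical in
lemma IsPartialRep.exists_mem (h : IsPartialRep G r n p E)
    (hG : ∀ S W : Finset V, S.card = 3 → W.card = 3 → (∀ u ∈ S, ∀ w ∈ W, G.Adj u w) → False)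
    {v : V} (hv : r v = n) {S : Finset V} (hS : S.card = 3) (hSn : ∀ u ∈ S, r u < n)
    (hSc : G.IsClique S) (hSv : ∀ u ∈ S, G.Adj u v) : ∃ R, (S, R) ∈ E := by
  have hcount := h.count S hS hSn hSc
  suffices h1 : 0 < (E.map Prod.fst).count S by
    obtain ⟨⟨T, R⟩, hT, rfl⟩ := List.mem_map.1 (List.count_pos_iff.1 h1)
    exact ⟨R, hT⟩
  by_contra! h0
  set W : Finset V := {w | r w < n ∧ ∀ u ∈ S, G.Adj u w} with hW
  have hvW : v ∉ W := by simp [hW, hv]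
  obtain ⟨W', hW', hcard⟩ := Finset.exists_subset_card_eq
    (show 3 ≤ (insert v W).card by rw [Finset.card_insert_of_notMem hvW]; omega)
  refine hG S W' hS hcard fun u hu w hw => ?_
  rcases Finset.mem_insert.1 (hW' hw) with rfl | hw
  · exact hSv u hu
  · exact (Finset.mem_filter.1 hw).2.2 u hu

open Classical in
/-- A vertex whose earlier neighbours form a triangle with a free region can be inserted. -/
lemma IsPartialRep.step_cons {R : Set (ℝ × ℝ)} {S : Finset V}
    (h : IsPartialRep G r n p ((S, R) :: E)) {v : V} (hv : r v = n)
    (hr : ∀ u, r u < n + 1 → u ≠ v → r u < n) (hS : S.card = 3) (hSc : G.IsClique S)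
    (hSv : ∀ u, r u < n → (G.Adj u v ↔ u ∈ S)) :
    ∃ p' E', IsPartialRep G r (n + 1) p' E' := by
  obtain ⟨a, b, c, hSabc, hR⟩ := h.free (S, R) (by simp)
  obtain ⟨x, y, w, k, hw, hk, R₁, R₂, R₃, hs⟩ := hR.exists_splitting
  have hSn := h.lt (S, R) (by simp)
  have hEn (e) (he : e ∈ E) := h.lt e (by simp [he])
  have hvn (u) (hu : r u < n) : u ≠ v := by rintro rfl; omega
  have hdis (e) (he : e ∈ E) : Disjoint R e.2 := (List.pairwise_cons.1 h.pairwise).1 e he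
  dsimp only at hSabc hSn
  subst hSabc
  have hne : a ≠ b ∧ a ≠ c ∧ b ≠ c := by
    have h2 (x y : V) (hxy : ({a, b, c} : Finset V) ⊆ {x, y}) : False := by
      have := (Finset.card_le_card hxy).trans Finset.card_le_two
      omega
    exact ⟨fun h => h2 a c (by simp [h]), fun h => h2 b c (by simp [h]),
      fun h => h2 a c (by simp [h])⟩
  have han : r a < n := hSn a (by simp)
  have hbn : r b < n := hSn b (by simp)
  have hcn : r c < n := hSn c (by simp)
  have hav := (hSv a han).2 (by simp)
  have hbv := (hSv b hbn).2 (by simp)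
  have hcv := (hSv c hcn).2 (by simp)
  set p' := Function.update p v (x, y, w, k) with hp'
  have hpv : lShapeOf (p' v) = LShape x y w k := by simp [hp', lShapeOf]
  have hpu (u) (hu : r u < n) : p' u = p u := by simp [hp', hvn u hu]
  have hmeet (u) (hu : r u < n) : G.Adj u v ↔ (LShape x y w k ∩ lShapeOf (p u)).Nonempty := by
    rw [hSv u hu]
    refine ⟨fun hm => ?_, fun hm => by_contra fun hn => ?_⟩
    · simp only [Finset.mem_insert, Finset.mem_singleton] at hm
      rcases hm with rfl | rfl | rfl
      exacts [hs.meetA, hs.meetB, hs.meetC]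
    · obtain ⟨q, hq, hq'⟩ := hm
      exact Set.disjoint_left.1 (h.avoid _ (by simp) u hu hn) hq' (hs.subset hq)
  have hnew {X Y Z : V} (hX : r X < n) (hY : r Y < n) {Q} (hQ : Q ⊆ R)
      (hXYZ : ({a, b, c} : Finset V) ⊆ {X, Y, Z}) (hZ : Disjoint (lShapeOf (p Z)) Q) (u)
      (hu : r u < n + 1) (hm : u ∉ ({X, Y, v} : Finset V)) : Disjoint (lShapeOf (p' u)) Q := by
    simp only [Finset.mem_insert, Finset.mem_singleton, not_or] at hm
    have hun := hr u hu hm.2.2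
    rw [hpu u hun]
    by_cases huZ : u = Z
    · rwa [huZ]
    · refine (h.avoid _ List.mem_cons_self u hun fun huS => ?_).mono_right hQ
      simpa [hm.1, hm.2.1, huZ] using hXYZ huS
  refine ⟨p', ({a, b, v}, R₁) :: ({a, c, v}, R₂) :: ({b, c, v}, R₃) :: E, ?_⟩
  constructor
  case pos =>
    intro u
    by_cases huv : u = v
    · simp [hp', huv, hw, hk]
    · simpa [hp', huv] using h.pos u
  case adj_iff =>
    intro u t hut hu ht
    by_cases huv : u = v
    · subst huv
      have htn := hr t ht hut.symm
      rw [hpv, hpu t htn, G.adj_comm, hmeet t htn]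
    · have hun := hr u hu huv
      by_cases htv : t = v
      · subst htv
        rw [hpv, hpu u hun, hmeet u hun, Set.inter_comm]
      · have htn := hr t ht htv
        rw [hpu u hun, hpu t htn, h.adj_iff u t hut hun htn]
  case lt =>
    simp only [List.forall_mem_cons, Finset.mem_insert, Finset.mem_singleton]
    refine ⟨?_, ?_, ?_, fun e he u hu => (hEn e he u hu).trans n.lt_succ_self⟩ <;>
      · rintro u (rfl | rfl | rfl) <;> omega
  case free =>
    simp only [List.forall_mem_cons]
    refine ⟨?_, ?_, ?_, fun e he => (h.free e (by simp [he])).congr fun u hu => ?_⟩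
    · exact IsFreeRegionInsert.isFreeFor (by simpa only [hpv, hpu a han, hpu b hbn] using hs.free₁)
    · exact IsFreeRegionInsert.isFreeFor (by simpa only [hpv, hpu a han, hpu c hcn] using hs.free₂)
    · exact IsFreeRegionInsert.isFreeFor (by simpa only [hpv, hpu b hbn, hpu c hcn] using hs.free₃)
    · rw [hpu u (hEn e he u hu)]
  case avoid =>
    simp only [List.forall_mem_cons]
    refine ⟨?_, ?_, ?_, fun e he u hu hm => ?_⟩
    · exact hnew han hbn hs.subset₁ (by grind) hs.avoid₁
    · exact hnew han hcn hs.subset₂ (by grind) hs.avoid₂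
    · exact hnew hbn hcn hs.subset₃ (by grind) hs.avoid₃
    · by_cases huv : u = v
      · rw [huv, hpv]
        exact (hdis e he).mono_left hs.subset
      · rw [hpu u (hr u hu huv)]
        exact h.avoid e (by simp [he]) u (hr u hu huv) hm
  case pairwise =>
    simp only [List.pairwise_cons, List.forall_mem_cons]
    exact ⟨⟨hs.disjoint₁₂, hs.disjoint₁₃, fun e he => (hdis e he).mono_left hs.subset₁⟩,
      ⟨hs.disjoint₂₃, fun e he => (hdis e he).mono_left hs.subset₂⟩,
      fun e he => (hdis e he).mono_left hs.subset₃, (List.pairwise_cons.1 h.pairwise).2⟩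
  case count =>
    intro T hT hTn hTc
    have hmem {X Y Z : V} (hZ : r Z < n) (hXZ : G.Adj X Z) (hYZ : G.Adj Y Z) (hZv : G.Adj Z v) :
        1 ≤ Finset.card {w | r w < n + 1 ∧ ∀ u ∈ ({X, Y, v} : Finset V), G.Adj u w} := by
      refine Finset.card_pos.2 ⟨Z, ?_⟩
      simp [hXZ, hYZ, hZv.symm, hZ.le]
    by_cases hvT : v ∈ T
    · have hTS (u) (hu : u ∈ T) (huv : u ≠ v) : u = a ∨ u = b ∨ u = c := by
        simpa using (hSv u (hr u (hTn u hu) huv)).1 (hTc hu hvT huv)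
      have hclique {X Y : V} (hX : X ∈ ({a, b, c} : Finset V)) (hY : Y ∈ ({a, b, c} : Finset V))
          (hne : X ≠ Y) : G.Adj X Y := hSc hX hY hne
      have hab : G.Adj a b := hclique (by simp) (by simp) hne.1
      have hac : G.Adj a c := hclique (by simp) (by simp) hne.2.1
      have hbc : G.Adj b c := hclique (by simp) (by simp) hne.2.2
      rcases eq_of_card_three_of_subset_insert hT hvT hTS with rfl | rfl | rfl
      · have hone := hmem hcn hac hbc hcv
        have hpos : 1 ≤ (List.map Prod.fst (({a, b, v}, R₁) :: ({a, c, v}, R₂) ::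
          ({b, c, v}, R₃) :: E)).count {a, b, v} := List.count_pos_iff.2 (by simp)
        omega
      · have hone := hmem hbn hab hbc.symm hbv
        have hpos : 1 ≤ (List.map Prod.fst (({a, b, v}, R₁) :: ({a, c, v}, R₂) ::
          ({b, c, v}, R₃) :: E)).count {a, c, v} := List.count_pos_iff.2 (by simp)
        omega
      · have hone := hmem han hab.symm hac.symm hav
        have hpos : 1 ≤ (List.map Prod.fst (({a, b, v}, R₁) :: ({a, c, v}, R₂) ::
          ({b, c, v}, R₃) :: E)).count {b, c, v} := List.count_pos_iff.2 (by simp)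
        omega
    · have hTn' (u) (hu : u ∈ T) : r u < n := hr u (hTn u hu) (by rintro rfl; exact hvT hu)
      have hcount := h.count T hT hTn' hTc
      have hle : (E.map Prod.fst).count T ≤ (List.map Prod.fst (({a, b, v}, R₁) ::
          ({a, c, v}, R₂) :: ({b, c, v}, R₃) :: E)).count T :=
        List.Sublist.count_le _ (.map _ (.cons _ (.cons _ (.cons _ (.refl E)))))
      set W : Finset V := {w | r w < n ∧ ∀ u ∈ T, G.Adj u w} with hW
      set W' : Finset V := {w | r w < n + 1 ∧ ∀ u ∈ T, G.Adj u w} with hW'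
      have hWW' : W ⊆ W' := fun w hw => by
        simp only [hW, hW', Finset.mem_filter] at hw ⊢
        exact ⟨hw.1, hw.2.1.trans n.lt_succ_self, hw.2.2⟩
      by_cases hTS : T = {a, b, c}
      · have hvW : v ∉ W := by simp [hW, hv]
        have hvW' : v ∈ W' := by simp [hW', hv, hTS, hav, hbv, hcv]
        have hlt : W.card < W'.card :=
          Finset.card_lt_card (Finset.ssubset_iff_subset_ne.2 ⟨hWW', by grind⟩)
        rw [List.map_cons, hTS, List.count_cons_self, ← hTS] at hcount
        omega
      · have hle' := Finset.card_le_card hWW'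
        rw [List.map_cons, List.count_cons_of_ne (Ne.symm hTS)] at hcount
        omega

/-- Any common neighbour of a triangle can be inserted. -/
lemma IsPartialRep.step (h : IsPartialRep G r n p E)
    (hG : ∀ S W : Finset V, S.card = 3 → W.card = 3 → (∀ u ∈ S, ∀ w ∈ W, G.Adj u w) → False)
    {v : V} (hv : r v = n) (hr : ∀ u, r u < n + 1 → u ≠ v → r u < n) {S : Finset V}
    (hS : S.card = 3) (hSn : ∀ u ∈ S, r u < n) (hSc : G.IsClique S)
    (hSv : ∀ u, r u < n → (G.Adj u v ↔ u ∈ S)) : ∃ p' E', IsPartialRep G r (n + 1) p' E' := by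
  classical
  obtain ⟨R, hR⟩ := h.exists_mem hG hv hS hSn hSc fun u hu => (hSv u (hSn u hu)).2 hu
  exact (h.perm (List.perm_cons_erase hR)).step_cons hv hr hS hSc hSv

open Classical in
lemma isPartialRep_three (hr : Function.Injective r) {v₀ v₁ v₂ : V} (h₀ : r v₀ = 0)
    (h₁ : r v₁ = 1) (h₂ : r v₂ = 2) (h₀₁ : G.Adj v₀ v₁) (h₀₂ : G.Adj v₀ v₂)
    (h₁₂ : G.Adj v₁ v₂) : ∃ p E, IsPartialRep G r 3 p E := by
  set p : V → ℝ × ℝ × ℝ × ℝ := fun u =>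
    if r u = 0 then (1, 3, 10, 2) else if r u = 1 then (2, 2, 2, 10) else (4, 1, 1, 10) with hp
  have hu (u) (hu : r u < 3) : u = v₀ ∨ u = v₁ ∨ u = v₂ := by
    simp only [← hr.eq_iff]
    omega
  have hp₀ : lShapeOf (p v₀) = LShape 1 3 10 2 := by simp [hp, lShapeOf, h₀]
  have hp₁ : lShapeOf (p v₁) = LShape 2 2 2 10 := by simp [hp, lShapeOf, h₁]
  have hp₂ : lShapeOf (p v₂) = LShape 4 1 1 10 := by simp [hp, lShapeOf, h₂]
  have m₀ (q) : q ∈ LShape 1 3 10 2 ↔ _ := mem_LShape (by norm_num) (by norm_num)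
  have m₁ (q) : q ∈ LShape 2 2 2 10 ↔ _ := mem_LShape (by norm_num) (by norm_num)
  have m₂ (q) : q ∈ LShape 4 1 1 10 ↔ _ := mem_LShape (by norm_num) (by norm_num)
  have i₀₁ : (LShape 1 3 10 2 ∩ LShape 2 2 2 10).Nonempty :=
    ⟨(2, 3), by rw [m₀]; norm_num, by rw [m₁]; norm_num⟩
  have i₀₂ : (LShape 1 3 10 2 ∩ LShape 4 1 1 10).Nonempty :=
    ⟨(4, 3), by rw [m₀]; norm_num, by rw [m₂]; norm_num⟩
  have i₁₂ : (LShape 2 2 2 10 ∩ LShape 4 1 1 10).Nonempty :=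
    ⟨(4, 2), by rw [m₁]; norm_num, by rw [m₂]; norm_num⟩
  refine ⟨p, [({v₀, v₁, v₂}, conotchedRect 0 (11 / 4) 3 4 4 6),
    ({v₀, v₁, v₂}, notchedRect 1 2 3 (11 / 4) 4 3)], ?_⟩
  constructor
  case pos =>
    intro u
    simp only [hp]
    split_ifs <;> norm_num
  case adj_iff =>
    intro u t hut hun htn
    rcases hu u hun with rfl | rfl | rfl <;> rcases hu t htn with rfl | rfl | rfl <;>
      simp_all [G.adj_comm, Set.inter_comm]
  case lt =>
    simp [h₀, h₁, h₂]
  case free =>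
    simp only [List.forall_mem_cons]
    refine ⟨⟨v₀, v₁, v₂, rfl, ?_⟩, ⟨v₀, v₁, v₂, rfl, ?_⟩, by simp⟩
    · simpa only [hp₀, hp₁, hp₂] using isFreeRegion_conotchedRect
    · simpa only [hp₀, hp₁, hp₂] using isFreeRegion_notchedRect
  case avoid =>
    simp only [List.forall_mem_cons]
    exact ⟨fun u hun hm => absurd (hu u hun) (by simpa using hm),
      fun u hun hm => absurd (hu u hun) (by simpa using hm), by simp⟩
  case pairwise =>
    simp only [List.pairwise_pair, Set.disjoint_left]
    rintro q ⟨h1, h2, h3, h4, h5⟩ ⟨h6, h7, h8, h9, h10⟩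
    grind
  case count =>
    intro T hT hTn hTc
    have hsub : T ⊆ {v₀, v₁, v₂} := fun u huT => by simpa using hu u (hTn u huT)
    rw [Finset.eq_of_subset_of_card_le hsub (hT ▸ Finset.card_le_three)]
    simp

end Construction

lemma IsThreeTree.hasLRep_of_forall {V : Type*} {G : SimpleGraph V} (h3 : IsThreeTree G)
    (hG : ∀ S W : Finset V, S.card = 3 → W.card = 3 → (∀ u ∈ S, ∀ w ∈ W, G.Adj u w) → False) :
    HasLRep G := by
  obtain ⟨hn, r, hbase, hstep⟩ := h3
  have : Finite V := (Nat.card_pos_iff.1 (by omega)).2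
  have := Fintype.ofFinite V
  set ρ : V → ℕ := fun u => r u with hρ
  have hinj : Function.Injective ρ := Fin.val_injective.comp r.injective
  have hsurj (i : ℕ) (hi : i < Nat.card V) : ∃ v, ρ v = i := ⟨r.symm ⟨i, hi⟩, by simp [hρ]⟩
  have key (n : ℕ) (hn3 : 3 ≤ n) : n ≤ Nat.card V → ∃ p E, IsPartialRep G ρ n p E := by
    induction n, hn3 using Nat.le_induction with
    | base =>
      intro _
      obtain ⟨v₀, h₀⟩ := hsurj 0 (by omega)
      obtain ⟨v₁, h₁⟩ := hsurj 1 (by omega)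
      obtain ⟨v₂, h₂⟩ := hsurj 2 (by omega)
      have hadj {u v : V} (huv : ρ u < ρ v) (hv : ρ v < 4) : G.Adj u v :=
        hbase u v (by rintro rfl; exact lt_irrefl _ huv) (huv.trans hv) hv
      exact isPartialRep_three hinj h₀ h₁ h₂ (hadj (by omega) (by omega))
        (hadj (by omega) (by omega)) (hadj (by omega) (by omega))
    | succ n hn3 ih =>
      intro hnV
      obtain ⟨p, E, h⟩ := ih (by omega)
      obtain ⟨v, hv⟩ := hsurj n hnV
      have hr (u) (hu : ρ u < n + 1) (huv : u ≠ v) : ρ u < n := by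
        have := hinj.ne huv
        omega
      have hS : ∃ S : Finset V, S.card = 3 ∧ (∀ u ∈ S, ρ u < ρ v) ∧
          (∀ a ∈ S, ∀ c ∈ S, a ≠ c → G.Adj a c) ∧
          (∀ u : V, ρ u < ρ v → (G.Adj u v ↔ u ∈ S)) := by
        rcases hn3.eq_or_lt with rfl | hn4
        · refine ⟨Finset.univ.filter fun u => ρ u < 3, ?_, by simp [hv], ?_, ?_⟩
          · rw [← Finset.card_range 3]
            refine Finset.card_bij (fun u _ => ρ u) (by simp) (fun a _ b _ hab => hinj hab) ?_
            intro i hi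
            obtain ⟨u, rfl⟩ := hsurj i (by rw [Finset.mem_range] at hi; omega)
            exact ⟨u, by simpa using hi, rfl⟩
          · simp only [Finset.mem_filter]
            exact fun a ha c hc hac => hbase a c hac (ha.2.trans (by omega)) (hc.2.trans (by omega))
          · intro u hu
            have hne : u ≠ v := by rintro rfl; exact lt_irrefl _ hu
            simp only [Finset.mem_filter, Finset.mem_univ, true_and, ← hv, hu, iff_true]
            exact hbase u v hne (by change ρ u < 4; omega) (by change ρ v < 4; omega)
        · exact hstep v (by change 4 ≤ ρ v; omega)
      obtain ⟨S, hS, hSn, hSc, hSv⟩ := hS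
      rw [hv] at hSn hSv
      exact h.step hG hv hr hS hSn (fun a ha c hc => hSc a ha c hc) hSv
  obtain ⟨p, E, h⟩ := key _ (by omega) le_rfl
  exact ⟨p, h.pos, fun u v huv => h.adj_iff u v huv (r u).2 (r v).2⟩

/-- Every planar 3-tree admits an `{L}`-representation: an
intersection representation where every vertex is an axis-aligned L-shape of a single
rotation, adjacency being intersection of the shapes. -/
theorem planar_three_tree_hasLRep {V : Type*} (G : SimpleGraph V)
    (h3 : IsThreeTree G) (hpl : G.IsPlanar) : HasLRep G :=
  h3.hasLRep_of_forall fun _ _ => hpl.not_adj_three_three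
end

section
/- For every fixed t ≥ 2, the number of cocomparability graphs on n labeled vertices arising from posets of dimension at most t is at least n^{(t−1−o(1))n}; that is, log of this number is at least n(t−1−o(1))·log n. -/
/-- The cocomparability graph of a partial order: two distinct elements are adjacent
iff they are incomparable. -/
def cocompGraph {α : Type*} (P : PartialOrder α) : SimpleGraph α :=
  SimpleGraph.fromRel (fun a b => ¬ P.le a b ∧ ¬ P.le b a)

/-- The partial order `P` has dimension at most `t`: its order relation is the
intersection of `t` linear orders on the ground set. -/
def HasDimAtMost {α : Type*} (P : PartialOrder α) (t : ℕ) : Prop :=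
  ∃ r : Fin t → α → α → Prop, (∀ i, IsLinearOrder α (r i)) ∧
    ∀ a b : α, P.le a b ↔ ∀ i, r i a b

/-- The dominance order of the points with coordinates `c a`, where ties in each coordinate
are broken by the linear order of `α`. -/
abbrev dominanceOrder {α ι : Type*} [LinearOrder α] [Nonempty ι] (c : α → ι → ℕ) :
    PartialOrder α :=
  PartialOrder.lift (fun a i => toLex (c a i, a)) fun a b h => by
    simpa using congrArg (fun p : ℕ ×ₗ α => (ofLex p).2) (congrFun h (Classical.arbitrary ι))

theorem dominanceOrder_le_iff {α ι : Type*} [LinearOrder α] [Nonempty ι] (c : α → ι → ℕ)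
    (a b : α) :
    (dominanceOrder c).le a b ↔ ∀ i, c a i < c b i ∨ c a i = c b i ∧ a ≤ b := by
  change (∀ i, toLex (c a i, a) ≤ toLex (c b i, b)) ↔ _
  simp [Prod.Lex.toLex_le_toLex]

theorem hasDimAtMost_dominanceOrder {α : Type*} [LinearOrder α] {t : ℕ} [NeZero t]
    (c : α → Fin t → ℕ) : HasDimAtMost (dominanceOrder c) t := by
  refine ⟨fun i a b => toLex (c a i, a) ≤ toLex (c b i, b), fun i => ?_, fun a b => Iff.rfl⟩
  exact
    { refl := fun a => le_refl _
      trans := fun a b d h h' => le_trans h h'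
      antisymm := fun a b h h' => by
        simpa using congrArg (fun p : ℕ ×ₗ α => (ofLex p).2) (le_antisymm h h')
      total := fun a b => le_total _ _ }

/-- Coordinates of a configuration of points `Fin k` placed freely by `y`, together with
reference points `Fin t × Fin m`: the reference point `(i, j)` compares with a free point
according to the position of the `i`-th coordinate of the latter relative to `j`. -/
def gridCoord {t m k : ℕ} (y : Fin k → Fin t → Fin m) :
    (Fin t × Fin m) ⊕ Fin k → Fin t → ℕ :=
  Sum.elim (fun p i => if i = p.1 then 2 * p.2 + 3 else 0) (fun x i => 2 * y x i + 2)

theorem cocompGraph_gridCoord_adj {α : Type*} [LinearOrder α] {t m k : ℕ} [NeZero t]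
    (ht : 2 ≤ t) (e : α ≃ (Fin t × Fin m) ⊕ Fin k) (y : Fin k → Fin t → Fin m)
    (x : Fin k) (i : Fin t) (j : Fin m) :
    (cocompGraph (dominanceOrder (gridCoord y ∘ e))).Adj
      (e.symm (Sum.inl (i, j))) (e.symm (Sum.inr x)) ↔ y x i ≤ j := by
  have hne : ∃ i' : Fin t, i' ≠ i := by
    have : Nontrivial (Fin t) := Fin.nontrivial_iff_two_le.mpr ht
    exact exists_ne i
  have hnot : ¬ (dominanceOrder (gridCoord y ∘ e)).le
      (e.symm (Sum.inr x)) (e.symm (Sum.inl (i, j))) := by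
    obtain ⟨i', hi'⟩ := hne
    intro h
    have := (dominanceOrder_le_iff _ _ _).1 h i'
    simp [gridCoord, hi'] at this
  have hle : (dominanceOrder (gridCoord y ∘ e)).le
      (e.symm (Sum.inl (i, j))) (e.symm (Sum.inr x)) ↔ j < y x i := by
    rw [dominanceOrder_le_iff]
    constructor
    · intro h
      have := h i
      simp only [gridCoord, Function.comp_apply, Equiv.apply_symm_apply, Sum.elim_inl,
        Sum.elim_inr, if_true] at this
      rw [Fin.lt_def]
      omega
    · intro h i'
      left
      rw [Fin.lt_def] at h
      simp only [gridCoord, Function.comp_apply, Equiv.apply_symm_apply, Sum.elim_inl,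
        Sum.elim_inr]
      split_ifs with hi
      · subst hi
        omega
      · omega
  simp only [cocompGraph, SimpleGraph.fromRel_adj, hnot, hle, not_lt, ne_eq,
    EmbeddingLike.apply_eq_iff_eq, reduceCtorEq, not_false_eq_true, true_and, and_true, or_self]

theorem cocompGraph_gridCoord_injective {α : Type*} [LinearOrder α] {t m k : ℕ} [NeZero t]
    (ht : 2 ≤ t) (e : α ≃ (Fin t × Fin m) ⊕ Fin k) :
    Function.Injective fun y : Fin k → Fin t → Fin m =>
      cocompGraph (dominanceOrder (gridCoord y ∘ e)) := by
  intro y z h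
  ext1 x
  ext1 i
  refine eq_of_forall_ge_iff fun j => ?_
  rw [← cocompGraph_gridCoord_adj ht e y x i j, ← cocompGraph_gridCoord_adj ht e z x i j]
  exact iff_of_eq (congrArg (fun G : SimpleGraph α => G.Adj _ _) h)

theorem pow_le_ncard_cocompGraph {t m k n : ℕ} (ht : 2 ≤ t) (hn : t * m + k = n) :
    m ^ (t * k) ≤ {G : SimpleGraph (Fin n) | ∃ P : PartialOrder (Fin n),
            HasDimAtMost P t ∧ G = cocompGraph P}.ncard := by
  have : NeZero t := ⟨by omega⟩
  let e : Fin n ≃ (Fin t × Fin m) ⊕ Fin k := Fintype.equivOfCardEq (by simp [hn])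
  have hcard := Set.ncard_image_of_injective Set.univ
    (cocompGraph_gridCoord_injective (k := k) ht e)
  rw [Set.ncard_univ, Nat.card_eq_fintype_card] at hcard
  simp only [Fintype.card_fun, Fintype.card_fin, ← pow_mul] at hcard
  rw [← hcard]
  refine Set.ncard_le_ncard ?_ (Set.toFinite _)
  rintro _ ⟨y, -, rfl⟩
  exact ⟨_, hasDimAtMost_dominanceOrder _, rfl⟩

theorem exists_rpow_sub_le_div_pow (d s : ℕ) (hd : 0 < d) (ε : ℝ) (hε : 0 < ε) :
    ∃ N : ℕ, ∀ n : ℕ, N ≤ n → 0 < n / d ∧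
      (n : ℝ) ^ ((s : ℝ) - ε) ≤ ((n / d : ℕ) : ℝ) ^ s := by
  have hlim := (tendsto_rpow_atTop hε).comp (tendsto_natCast_atTop_atTop (R := ℝ))
  obtain ⟨N, hN⟩ := Filter.eventually_atTop.1
    (hlim.eventually_ge_atTop ((2 * d : ℝ) ^ s))
  refine ⟨max N d, fun n hn => ?_⟩
  have hC : (2 * d : ℝ) ^ s ≤ (n : ℝ) ^ ε := hN n (le_trans (le_max_left _ _) hn)
  have hdn : d ≤ n := le_trans (le_max_right _ _) hn
  have hm : 0 < n / d := Nat.div_pos hdn hd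
  refine ⟨hm, ?_⟩
  have hn0 : (0 : ℝ) < n := by exact_mod_cast hd.trans_le hdn
  have hnm : (n : ℝ) ≤ 2 * d * (n / d : ℕ) := by
    have h1 := Nat.lt_mul_div_succ n hd
    have h2 : n ≤ 2 * d * (n / d) := by nlinarith
    exact_mod_cast h2
  rw [Real.rpow_sub hn0, Real.rpow_natCast, div_le_iff₀ (Real.rpow_pos_of_pos hn0 ε)]
  calc (n : ℝ) ^ s ≤ (2 * d * (n / d : ℕ)) ^ s := by gcongr
    _ = ((n / d : ℕ) : ℝ) ^ s * (2 * d : ℝ) ^ s := by rw [mul_pow, mul_comm]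
    _ ≤ _ := by gcongr

/-- For every fixed `t ≥ 2`, the number of cocomparability graphs
on `n` labeled vertices arising from posets of dimension at most `t` is at least
`n ^ ((t - 1 - o(1)) n)`: for every `ε > 0`, for all large enough `n` there are at
least `n ^ ((t - 1 - ε) n)` such graphs. -/
theorem count_cocomparability_graphs_ge (t : ℕ) (ht : 2 ≤ t) (ε : ℝ) (hε : 0 < ε) :
    ∃ N : ℕ, ∀ n : ℕ, N ≤ n →
      (n : ℝ) ^ (((t : ℝ) - 1 - ε) * n) ≤
        ({G : SimpleGraph (Fin n) | ∃ P : PartialOrder (Fin n),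
            HasDimAtMost P t ∧ G = cocompGraph P}.ncard : ℝ) := by
  obtain ⟨N, hN⟩ := exists_rpow_sub_le_div_pow (t ^ 2) (t - 1) (by positivity) ε hε
  refine ⟨N, fun n hn => ?_⟩
  obtain ⟨hm, hpow⟩ := hN n hn
  set m := n / t ^ 2 with hmdef
  have hmul : t * (t * m) ≤ n := by
    have := Nat.mul_div_le n (t ^ 2)
    rwa [← hmdef, pow_two, mul_assoc] at this
  have htm : t * m ≤ n := (Nat.le_mul_of_pos_left _ (by omega)).trans hmul
  have hexp : (t - 1) * n ≤ t * (n - t * m) := by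
    rw [Nat.sub_mul, Nat.mul_sub, one_mul]
    omega
  have hcast : ((t - 1 : ℕ) : ℝ) = (t : ℝ) - 1 := by
    rw [Nat.cast_sub (by omega), Nat.cast_one]
  have hcount := pow_le_ncard_cocompGraph (m := m) ht (Nat.add_sub_cancel' htm)
  calc (n : ℝ) ^ (((t : ℝ) - 1 - ε) * n)
      = ((n : ℝ) ^ (((t - 1 : ℕ) : ℝ) - ε)) ^ n := by
        rw [Real.rpow_mul (Nat.cast_nonneg n), Real.rpow_natCast, hcast]
    _ ≤ ((m : ℝ) ^ (t - 1)) ^ n := by gcongr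
    _ = (m : ℝ) ^ ((t - 1) * n) := by rw [pow_mul]
    _ ≤ (m : ℝ) ^ (t * (n - t * m)) := pow_le_pow_right₀ (by exact_mod_cast hm) hexp
    _ ≤ _ := by exact_mod_cast hcount
end
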